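/- arXiv:2104.08870 — 2 statements merged into one kernel-verified Lean document; each statement's English description precedes it below -/
import Mathlib

section
/- Let γ > 1 and let μ₁, μ₂ be positive reals with 1/γ < μ₁/μ₂ < γ. Then there exist positive reals a and b such that (γ−1)·π·a·b·(a+b)/(a+γb) = μ₁ and (γ−1)·π·a·b·(a+b)/(b+γa) = μ₂. In other words, any pair of positive eigenvalues whose ratio lies strictly between 1/γ and γ is realized as the pair of eigenvalues of the Pólya–Szegő tensor of some coordinate-aligned ellipse with conductivity contrast γ. -/
/-!
The two eigenvalues of the tensor of an ellipse are in the ratio `(b + γ a) : (a + γ b)`, and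
`(b + γ a) / (a + γ b)` is the average of `γ` and `γ⁻¹` with weights `a` and `γ b`. Hence every
ratio strictly between `γ` and `γ⁻¹` is attained by some shape `a : b`. The tensor scales like the
area, so a dilation then adjusts the size.
-/

/-- The pair of eigenvalues of the Pólya–Szegő tensor of the ellipse with semi-axes `a`, `b` along
the coordinate axes and conductivity contrast `γ`. The tensor is diagonal, so it is encoded by its
diagonal entries, the one for the direction of `a` first. -/
noncomputable def polyaSzegoEigenvalues (γ a b : ℝ) : ℝ × ℝ :=
  ((γ - 1) * Real.pi * a * b * (a + b) / (a + γ * b),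
    (γ - 1) * Real.pi * a * b * (a + b) / (b + γ * a))

theorem polyaSzegoEigenvalues_mul_mul (γ s a b : ℝ) :
    polyaSzegoEigenvalues γ (s * a) (s * b) = s ^ 2 • polyaSzegoEigenvalues γ a b := by
  rcases eq_or_ne s 0 with rfl | hs
  · simp [polyaSzegoEigenvalues]
  have numerator : (γ - 1) * Real.pi * (s * a) * (s * b) * (s * a + s * b) =
      s * (s ^ 2 * ((γ - 1) * Real.pi * a * b * (a + b))) := by ring
  have denominator (x y : ℝ) : s * x + γ * (s * y) = s * (x + γ * y) := by ring
  simp only [polyaSzegoEigenvalues, Prod.smul_mk, smul_eq_mul, numerator, denominator,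
    mul_div_mul_left _ _ hs, mul_div_assoc]

theorem polyaSzegoEigenvalues_eq_smul {γ a b : ℝ} (hab : a + γ * b ≠ 0) (hba : b + γ * a ≠ 0) :
    polyaSzegoEigenvalues γ a b =
      ((γ - 1) * Real.pi * a * b * (a + b) / ((a + γ * b) * (b + γ * a))) •
        (b + γ * a, a + γ * b) := by
  ext <;> simp only [polyaSzegoEigenvalues, Prod.smul_mk, smul_eq_mul] <;> field_simp

theorem openSegment_inv_eq_Ioo {K : Type*} [Field K] [LinearOrder K] [IsStrictOrderedRing K] {γ : K}
    (hγ : 1 < γ) : openSegment K γ γ⁻¹ = Set.Ioo γ⁻¹ γ := by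
  rw [openSegment_symm, openSegment_eq_Ioo ((inv_lt_one_of_one_lt₀ hγ).trans hγ)]

theorem exists_pos_add_mul_eq_of_div_mem_openSegment {K : Type*} [Field K] [LinearOrder K]
    [IsStrictOrderedRing K] {γ x y : K} (hγ : 0 < γ) (hy : 0 < y)
    (hxy : x / y ∈ openSegment K γ γ⁻¹) :
    ∃ a b : K, 0 < a ∧ 0 < b ∧ b + γ * a = x ∧ a + γ * b = y := by
  obtain ⟨t, u, ht, hu, htu, hratio⟩ := hxy
  simp only [smul_eq_mul] at hratio
  refine ⟨t * y, u * y / γ, by positivity, by positivity, ?_, ?_⟩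
  · calc u * y / γ + γ * (t * y) = (t * γ + u * γ⁻¹) * y := by ring
      _ = x := by rw [hratio, div_mul_cancel₀ _ hy.ne']
  · calc t * y + γ * (u * y / γ) = (t + u) * y := by field_simp
      _ = y := by rw [htu, one_mul]

theorem exists_polyaSzegoEigenvalues_eq_smul {γ μ₁ μ₂ : ℝ} (hγ : 0 < γ)
    (hμ₂ : 0 < (γ - 1) * μ₂) (hratio : μ₁ / μ₂ ∈ openSegment ℝ γ γ⁻¹) :
    ∃ a b c : ℝ, 0 < a ∧ 0 < b ∧ 0 < c ∧ polyaSzegoEigenvalues γ a b = c • (μ₁, μ₂) := by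
  have hγ1 : γ - 1 ≠ 0 := left_ne_zero_of_mul hμ₂.ne'
  rw [← mul_div_mul_left μ₁ μ₂ hγ1] at hratio
  obtain ⟨a, b, ha, hb, hba, hab⟩ := exists_pos_add_mul_eq_of_div_mem_openSegment hγ hμ₂ hratio
  have hdenom : (b + γ * a, a + γ * b) = (γ - 1) • (μ₁, μ₂) := by
    rw [hba, hab, Prod.smul_mk, smul_eq_mul, smul_eq_mul]
  refine ⟨a, b, (γ - 1) ^ 2 * (Real.pi * a * b * (a + b) / ((a + γ * b) * (b + γ * a))),
    ha, hb, by positivity, ?_⟩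
  rw [polyaSzegoEigenvalues_eq_smul (by positivity) (by positivity), hdenom, smul_smul]
  congr 1
  ring

/-- The tensor is negative definite when `γ < 1`, hence the factor `γ - 1` in `hμ₂`. -/
theorem polya_szego_eigenvalues_realizable_general {γ μ₁ μ₂ : ℝ} (hγ : 0 < γ)
    (hμ₂ : 0 < (γ - 1) * μ₂) (hratio : μ₁ / μ₂ ∈ openSegment ℝ γ γ⁻¹) :
    ∃ a b : ℝ, 0 < a ∧ 0 < b ∧ polyaSzegoEigenvalues γ a b = (μ₁, μ₂) := by
  obtain ⟨a, b, c, ha, hb, hc, heig⟩ := exists_polyaSzegoEigenvalues_eq_smul hγ hμ₂ hratio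
  have hs : 0 < √c⁻¹ := Real.sqrt_pos.2 (inv_pos.2 hc)
  refine ⟨√c⁻¹ * a, √c⁻¹ * b, mul_pos hs ha, mul_pos hs hb, ?_⟩
  rw [polyaSzegoEigenvalues_mul_mul, heig, Real.sq_sqrt (inv_pos.2 hc).le,
    inv_smul_smul₀ hc.ne']

/-- For `γ > 1`, any pair of positive eigenvalues `μ₁, μ₂` whose ratio lies strictly between
`1/γ` and `γ` is realized as the pair of eigenvalues of the Pólya–Szegő tensor
`(γ−1)·|B|·diag((a+b)/(a+γb), (a+b)/(b+γa))`, `|B| = π·a·b`, of some coordinate-aligned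
ellipse with semi-axes `a, b > 0` and conductivity contrast `γ`. -/
theorem polya_szego_eigenvalues_realizable
    (γ μ₁ μ₂ : ℝ) (hγ : 1 < γ) (hμ₁ : 0 < μ₁) (hμ₂ : 0 < μ₂)
    (hlo : 1 / γ < μ₁ / μ₂) (hhi : μ₁ / μ₂ < γ) :
    ∃ a b : ℝ, 0 < a ∧ 0 < b ∧
      (γ - 1) * Real.pi * a * b * (a + b) / (a + γ * b) = μ₁ ∧
      (γ - 1) * Real.pi * a * b * (a + b) / (b + γ * a) = μ₂ := by
  have hratio : μ₁ / μ₂ ∈ openSegment ℝ γ γ⁻¹ := by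
    simpa only [openSegment_inv_eq_Ioo hγ, Set.mem_Ioo, one_div] using And.intro hlo hhi
  simpa only [polyaSzegoEigenvalues, Prod.mk.injEq] using
    polya_szego_eigenvalues_realizable_general (zero_lt_one.trans hγ)
      (mul_pos (sub_pos.2 hγ) hμ₂) hratio
end

section
/- Let n be a finite type, let A, B₁, B₂ be n×n real matrices, and for real parameters s, r define S(s,r) = A + s·B₁ + r·B₂. Let t, h : n → ℝ be fixed vectors and define f(s,r) = tᵀ · S(s,r)⁻¹ · h. Suppose S(s₀,r₀) is invertible, and write S₀ = S(s₀,r₀). Then the mixed second partial derivative of f at (s₀,r₀), namely the derivative with respect to s at s₀ of the function s ↦ (derivative with respect to r at r₀ of r ↦ f(s,r)), equals tᵀ · S₀⁻¹ · ( B₂ · S₀⁻¹ · B₁ + B₁ · S₀⁻¹ · B₂ ) · S₀⁻¹ · h. -/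
open Matrix

/-!
Invertibility is an open condition, so the first-order formula `∂ᵣ S⁻¹ = -S⁻¹ (∂ᵣS) S⁻¹` holds for
all `s` near `s₀`. Differentiating its right-hand side in `s` by the product rule, each of the two
factors `S⁻¹` contributes one of the two symmetric terms, and the middle factor contributes
`-S⁻¹ (∂ₛ∂ᵣS) S⁻¹`, which vanishes when `S` is affine.
-/

open scoped Ring Topology

section NormedAlgebra

variable {𝕜 R F : Type*} [NontriviallyNormedField 𝕜] [NormedRing R] [HasSummableGeomSeries R]
  [NormedAlgebra 𝕜 R] [NormedAddCommGroup F] [NormedSpace 𝕜 F]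

theorem hasDerivAt_ringInverse_comp {S : 𝕜 → R} {S' : R} {x : 𝕜} (hS : HasDerivAt S S' x)
    (hx : IsUnit (S x)) :
    HasDerivAt (fun y => (S y)⁻¹ʳ) (-((S x)⁻¹ʳ * S' * (S x)⁻¹ʳ)) x := by
  obtain ⟨u, hu⟩ := hx
  have hinv : HasFDerivAt Ring.inverse _ (S x) := hu ▸ hasFDerivAt_ringInverse (𝕜 := 𝕜) u
  refine (hinv.comp_hasDerivAt x hS).congr_deriv ?_
  simp [← hu]

theorem hasDerivAt_ringInverse_mul_mul_ringInverse {S T : 𝕜 → R} {S' T' : R} {x : 𝕜}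
    (hS : HasDerivAt S S' x) (hT : HasDerivAt T T' x) (hx : IsUnit (S x)) :
    HasDerivAt (fun y => (S y)⁻¹ʳ * T y * (S y)⁻¹ʳ)
      (-((S x)⁻¹ʳ * (T x * (S x)⁻¹ʳ * S' + S' * (S x)⁻¹ʳ * T x - T') * (S x)⁻¹ʳ)) x := by
  have hinv := hasDerivAt_ringInverse_comp hS hx
  refine ((hinv.fun_mul hT).fun_mul hinv).congr_deriv ?_
  noncomm_ring

theorem hasDerivAt_deriv_map_ringInverse (φ : R →L[𝕜] F) {S : 𝕜 → 𝕜 → R} {S₁ S₁₂ : R}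
    {S₂ : 𝕜 → R} {s₀ r₀ : 𝕜} (hS₁ : HasDerivAt (fun s => S s r₀) S₁ s₀)
    (hS₂ : ∀ᶠ s in 𝓝 s₀, HasDerivAt (S s) (S₂ s) r₀) (hS₁₂ : HasDerivAt S₂ S₁₂ s₀)
    (hunit : IsUnit (S s₀ r₀)) :
    HasDerivAt (fun s => deriv (fun r => φ (S s r)⁻¹ʳ) r₀)
      (φ ((S s₀ r₀)⁻¹ʳ * (S₂ s₀ * (S s₀ r₀)⁻¹ʳ * S₁ + S₁ * (S s₀ r₀)⁻¹ʳ * S₂ s₀ - S₁₂) *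
        (S s₀ r₀)⁻¹ʳ)) s₀ := by
  have hunit_near : ∀ᶠ s in 𝓝 s₀, IsUnit (S s r₀) :=
    hS₁.continuousAt.eventually (Units.isOpen.mem_nhds hunit)
  have hderiv_near : (fun s => deriv (fun r => φ (S s r)⁻¹ʳ) r₀) =ᶠ[𝓝 s₀]
      fun s => φ (-((S s r₀)⁻¹ʳ * S₂ s * (S s r₀)⁻¹ʳ)) := by
    filter_upwards [hS₂, hunit_near] with s hs hunit_s
    exact (φ.hasFDerivAt.comp_hasDerivAt r₀ (hasDerivAt_ringInverse_comp hs hunit_s)).deriv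
  have hproduct := (hasDerivAt_ringInverse_mul_mul_ringInverse hS₁ hS₁₂ hunit).neg
  rw [neg_neg] at hproduct
  exact (φ.hasFDerivAt.comp_hasDerivAt s₀ hproduct).congr_of_eventuallyEq hderiv_near

end NormedAlgebra

theorem hasDerivAt_const_add_smul {𝕜 E : Type*} [NontriviallyNormedField 𝕜] [NormedAddCommGroup E]
    [NormedSpace 𝕜 E] (a b : E) (x : 𝕜) : HasDerivAt (fun y : 𝕜 => a + y • b) b x := by
  simpa using ((hasDerivAt_id x).smul_const b).const_add a

section Matrix

/-- The pairing `tᵀ M h` as a continuous linear functional of the matrix `M`. It expresses a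
simulated datum as a fixed functional applied to the inverse of the system matrix. -/
def dotProductMulVecCLM (𝕜 : Type*) {𝔸 m n : Type*} [CommSemiring 𝕜] [Semiring 𝔸] [Algebra 𝕜 𝔸]
    [TopologicalSpace 𝔸] [IsTopologicalSemiring 𝔸] [Fintype m] [Fintype n]
    (t : m → 𝔸) (h : n → 𝔸) : Matrix m n 𝔸 →L[𝕜] 𝔸 where
  toFun M := t ⬝ᵥ (M *ᵥ h)
  map_add' M N := by rw [add_mulVec, dotProduct_add]
  map_smul' c M := by rw [smul_mulVec, dotProduct_smul, RingHom.id_apply]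
  cont := by fun_prop

variable {𝕜 𝔸 n : Type*} [NontriviallyNormedField 𝕜] [NormedCommRing 𝔸] [NormedAlgebra 𝕜 𝔸]
  [CompleteSpace 𝔸] [Fintype n] [DecidableEq n]

theorem adjoint_field_mixed_second_derivative_general
    {S : 𝕜 → 𝕜 → Matrix n n 𝔸} {S₁ S₁₂ : Matrix n n 𝔸} {S₂ : 𝕜 → Matrix n n 𝔸}
    {s₀ r₀ : 𝕜} (t h : n → 𝔸) (hS₁ : HasDerivAt (fun s => S s r₀) S₁ s₀)
    (hS₂ : ∀ᶠ s in 𝓝 s₀, HasDerivAt (S s) (S₂ s) r₀) (hS₁₂ : HasDerivAt S₂ S₁₂ s₀)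
    (hInv : IsUnit (S s₀ r₀)) :
    HasDerivAt (fun s => deriv (fun r => t ⬝ᵥ ((S s r)⁻¹ *ᵥ h)) r₀)
      (t ⬝ᵥ ((S s₀ r₀)⁻¹ *ᵥ
        ((S₂ s₀ * (S s₀ r₀)⁻¹ * S₁ + S₁ * (S s₀ r₀)⁻¹ * S₂ s₀ - S₁₂) *ᵥ
          ((S s₀ r₀)⁻¹ *ᵥ h)))) s₀ := by
  -- Typeclass search does not identify the uniformity of the operator norm with the entrywise one.
  open scoped Matrix.Norms.Operator in
  have : HasSummableGeomSeries (Matrix n n 𝔸) :=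
    @instHasSummableGeomSeriesOfCompleteSpace _ _ (inferInstanceAs (CompleteSpace (Matrix n n 𝔸)))
  simp only [mulVec_mulVec, nonsing_inv_eq_ringInverse, ← mul_assoc]
  open scoped Matrix.Norms.Operator in
  exact hasDerivAt_deriv_map_ringInverse (dotProductMulVecCLM 𝕜 t h) hS₁ hS₂ hS₁₂ hInv

end Matrix

/-- Adjoint-field formula for the mixed second derivative of a simulated datum when the system
matrix depends affinely on the parameters: for `S(s,r) = A + s·B₁ + r·B₂` with `S₀ = S(s₀,r₀)`
invertible and `f(s,r) = tᵀ·S(s,r)⁻¹·h`, the derivative with respect to `s` at `s₀` of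
`s ↦ ∂f/∂r (s, r₀)` equals `tᵀ·S₀⁻¹·(B₂·S₀⁻¹·B₁ + B₁·S₀⁻¹·B₂)·S₀⁻¹·h`. -/
theorem adjoint_field_mixed_second_derivative
    {n : Type*} [Fintype n] [DecidableEq n]
    (A B₁ B₂ : Matrix n n ℝ) (t h : n → ℝ) (s₀ r₀ : ℝ)
    (hInv : IsUnit (A + s₀ • B₁ + r₀ • B₂)) :
    HasDerivAt
      (fun s : ℝ =>
        deriv (fun r : ℝ => t ⬝ᵥ ((A + s • B₁ + r • B₂)⁻¹ *ᵥ h)) r₀)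
      (t ⬝ᵥ ((A + s₀ • B₁ + r₀ • B₂)⁻¹ *ᵥ
        ((B₂ * (A + s₀ • B₁ + r₀ • B₂)⁻¹ * B₁ + B₁ * (A + s₀ • B₁ + r₀ • B₂)⁻¹ * B₂) *ᵥ
          ((A + s₀ • B₁ + r₀ • B₂)⁻¹ *ᵥ h)))) s₀ := by
  open scoped Matrix.Norms.Operator in
  simpa only [sub_zero] using adjoint_field_mixed_second_derivative_general t h
    ((hasDerivAt_const_add_smul A B₁ s₀).add_const (r₀ • B₂))
    (.of_forall fun s => hasDerivAt_const_add_smul (A + s • B₁) B₂ r₀)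
    (hasDerivAt_const s₀ B₂) hInv
end
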